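/- There exists a constant C > 0, depending only on d, a, μ⁻ and μ⁺, such that every time-periodic solution β ∈ L²(𝕋^{d+1}) ∩ H¹((0,1); L²(𝕋^d)) of ∂_s β − A(s)β = θ with ∫_{𝕋^{d+1}} β dξ ds = 0 satisfies ‖β‖_{L^∞(0,1; L²(𝕋^d))} ≤ C ‖θ‖_{L²(𝕋^{d+1})}. -/

import Mathlib

open MeasureTheory

noncomputable section

/-- The periodicity cell `[0,1)^d`, identified with the torus `𝕋^d`. -/
def cube (d : ℕ) : Set (Fin d → ℝ) := Set.univ.pi fun _ => Set.Ico (0 : ℝ) 1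

/-- The operator `A(s)` applied pointwise. -/
def Aop {d : ℕ} (a : (Fin d → ℝ) → ℝ) (μ : (Fin d → ℝ) → (Fin d → ℝ) → ℝ → ℝ)
    (s : ℝ) (v : (Fin d → ℝ) → ℝ) (ξ : Fin d → ℝ) : ℝ :=
  ∫ η, a (ξ - η) * μ ξ η s * (v η - v ξ)

/-- `β` is a time-periodic solution, in `L²(𝕋^{d+1}) ∩ H¹((0,1); L²(𝕋^d))`, of
`∂_s β - A(s)β = θ` (in the equivalent integrated-in-time formulation). -/
def IsCellSol {d : ℕ} (a : (Fin d → ℝ) → ℝ) (μ : (Fin d → ℝ) → (Fin d → ℝ) → ℝ → ℝ)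
    (θ : (Fin d → ℝ) → ℝ → ℝ) (β : (Fin d → ℝ) → ℝ → ℝ) : Prop :=
  Measurable (fun p : (Fin d → ℝ) × ℝ => β p.1 p.2) ∧
  (∀ ξ s, ∀ k : Fin d → ℤ, β (ξ + fun i => (k i : ℝ)) s = β ξ s) ∧
  (∀ ξ s, β ξ (s + 1) = β ξ s) ∧
  IntegrableOn (fun p : (Fin d → ℝ) × ℝ => (β p.1 p.2) ^ 2)
    (cube d ×ˢ Set.Ioo (0 : ℝ) 1) ∧
  (∀ᵐ ξ ∂(volume : Measure (Fin d → ℝ)), ∀ s ∈ Set.Icc (0 : ℝ) 1,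
    β ξ s = β ξ 0 + ∫ τ in (0 : ℝ)..s, (Aop a μ τ (fun η => β η τ) ξ + θ ξ τ))

/-
The operators `A(s)` have a spectral gap on `L²(𝕋^d)` that depends only on `a` and `μ⁻`. Indeed
`-⟨A(s) v, v⟩` dominates `(μ⁻ / 2) ∫ a(z) ‖v(· + z) - v‖² dz`, and the squared modulus of continuity
`z ↦ ‖v(· + z) - v‖²` is even and satisfies the triangle inequality up to a factor `2`. A set of
positive measure on which `a` is bounded below meets all its small translates substantially, so the
`a`-average of this modulus controls it near the origin, by doubling on the whole cell, and thus
controls the variance of `v`.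

Let `Θ = ‖θ‖²` and `y(s) = ‖β(·, s)‖²`. Since `A(s)` conserves mass, the spatial mean of `β` has
derivative `∫ θ dξ`; as its time average vanishes, its square is at most `Θ`. Over one period `y`
does not change, so the gap `l` and the source balance, `l ∫ y ds ≤ l Θ + ∫∫ |θ β|`, which by
Young's inequality bounds `∫ y ds` by `(2 + 1 / l²) Θ`. Finally `y' ≤ 2 ∫ |θ β| dξ`, so `y(s)`
exceeds the time average of `y` by at most `Θ + ∫ y ds`.
-/

section Development

open Set Filter Topology ProbabilityTheory
open scoped ENNReal Pointwise

section Auxiliary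

variable {X : Type*} [MeasurableSpace X] {P : Measure X}

lemma enorm_add_sq_le {E : Type*} [SeminormedAddCommGroup E] (x y : E) :
    ‖x + y‖ₑ ^ 2 ≤ 2 * ‖x‖ₑ ^ 2 + 2 * ‖y‖ₑ ^ 2 := by
  simp only [enorm_eq_nnnorm]
  norm_cast
  calc ‖x + y‖₊ ^ 2 ≤ (‖x‖₊ + ‖y‖₊) ^ 2 := by gcongr; exact nnnorm_add_le x y
    _ ≤ 2 * (‖x‖₊ ^ 2 + ‖y‖₊ ^ 2) := add_sq_le
    _ = 2 * ‖x‖₊ ^ 2 + 2 * ‖y‖₊ ^ 2 := mul_add _ _ _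

lemma memLp_two_iff_lintegral_enorm_sq_lt_top {E : Type*} [NormedAddCommGroup E] {f : X → E}
    (hf : AEStronglyMeasurable f P) : MemLp f 2 P ↔ ∫⁻ x, ‖f x‖ₑ ^ 2 ∂P < ∞ := by
  have h := eLpNorm_lt_top_iff_lintegral_rpow_enorm_lt_top (f := f) (μ := P) two_ne_zero
    ENNReal.ofNat_ne_top
  simp only [ENNReal.toReal_ofNat, ENNReal.rpow_two] at h
  rw [← h, MemLp, and_iff_right hf]

lemma ofReal_integral_sq {f : X → ℝ} (hf : MemLp f 2 P) :
    ENNReal.ofReal (∫ x, f x ^ 2 ∂P) = ∫⁻ x, ‖f x‖ₑ ^ 2 ∂P := by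
  rw [ofReal_integral_eq_lintegral_ofReal hf.integrable_sq (ae_of_all _ fun _ => sq_nonneg _)]
  simp only [← enorm_pow, Real.enorm_of_nonneg (sq_nonneg _)]

lemma sq_integral_le_integral_sq [IsProbabilityMeasure P] {f : X → ℝ} (hf : MemLp f 2 P) :
    (∫ x, f x ∂P) ^ 2 ≤ ∫ x, f x ^ 2 ∂P :=
  sub_nonneg.1 ((variance_nonneg f P).trans_eq (variance_eq_sub hf))

lemma enorm_integral_sq_le_lintegral_enorm_sq [IsProbabilityMeasure P] {E : Type*}
    [NormedAddCommGroup E] [NormedSpace ℝ E] {f : X → E} (hf : AEStronglyMeasurable f P) :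
    ‖∫ x, f x ∂P‖ₑ ^ 2 ≤ ∫⁻ x, ‖f x‖ₑ ^ 2 ∂P := by
  have h : ‖∫ x, f x ∂P‖ₑ ≤ eLpNorm f 2 P :=
    calc ‖∫ x, f x ∂P‖ₑ ≤ eLpNorm f 1 P := by
          rw [eLpNorm_one_eq_lintegral_enorm]; exact enorm_integral_le_lintegral_enorm f
      _ ≤ eLpNorm f 2 P := eLpNorm_le_eLpNorm_of_exponent_le one_le_two hf
  calc ‖∫ x, f x ∂P‖ₑ ^ 2 ≤ eLpNorm f 2 P ^ 2 := by gcongr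
    _ = ∫⁻ x, ‖f x‖ₑ ^ 2 ∂P := by
      rw [eLpNorm_eq_lintegral_rpow_enorm_toReal two_ne_zero ENNReal.ofNat_ne_top,
        ← ENNReal.rpow_two, ← ENNReal.rpow_mul]
      simp

lemma evariance_le_lintegral_enorm_sub_sq [IsProbabilityMeasure P] {f : X → ℝ}
    (hf : MemLp f 2 P) (c : ℝ) : eVar[f; P] ≤ ∫⁻ x, ‖f x - c‖ₑ ^ 2 ∂P := by
  have hfc : MemLp (fun x => f x - c) 2 P := hf.sub (memLp_const c)
  rw [← ofReal_variance hf, ← variance_sub_const hf.1 c, ← ofReal_integral_sq hfc]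
  exact ENNReal.ofReal_le_ofReal (variance_le_expectation_sq hfc.1)

lemma integral_abs_mul_le {f g : X → ℝ} (hf : MemLp f 2 P) (hg : MemLp g 2 P) {c : ℝ}
    (hc : 0 < c) :
    ∫ x, |f x * g x| ∂P ≤ 1 / (2 * c) * ∫ x, f x ^ 2 ∂P + c / 2 * ∫ x, g x ^ 2 ∂P := by
  have hyoung : ∀ x, |f x * g x| ≤ 1 / (2 * c) * f x ^ 2 + c / 2 * g x ^ 2 := fun x => by
    have hsq : 1 / (2 * c) * f x ^ 2 + c / 2 * g x ^ 2 - |f x| * |g x| =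
        (|f x| - c * |g x|) ^ 2 / (2 * c) := by
      rw [← sq_abs (f x), ← sq_abs (g x)]
      field_simp
      ring
    rw [abs_mul, ← sub_nonneg, hsq]
    positivity
  rw [← integral_const_mul, ← integral_const_mul,
    ← integral_add (hf.integrable_sq.const_mul _) (hg.integrable_sq.const_mul _)]
  exact integral_mono (hf.integrable_mul hg).abs
    ((hf.integrable_sq.const_mul _).add (hg.integrable_sq.const_mul _)) hyoung

end Auxiliary

/-- Even functions satisfying the triangle inequality with a factor `2`; this is the behaviour of
the square of an even subadditive function, here of the `L²` modulus of continuity. -/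
structure QuasiSubadditive {G : Type*} [AddGroup G] (N : G → ℝ≥0∞) : Prop where
  neg : ∀ z, N (-z) = N z
  add_le : ∀ y z, N (y + z) ≤ 2 * N y + 2 * N z

namespace QuasiSubadditive

lemma two_pow_nsmul_le {G : Type*} [AddGroup G] {N : G → ℝ≥0∞} (hN : QuasiSubadditive N) (z : G)
    (n : ℕ) : N (2 ^ n • z) ≤ 4 ^ n * N z := by
  induction n with
  | zero => simp
  | succ n ih =>
    calc N (2 ^ (n + 1) • z) = N (2 ^ n • z + 2 ^ n • z) := by rw [pow_succ', mul_smul, two_nsmul]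
      _ ≤ 2 * N (2 ^ n • z) + 2 * N (2 ^ n • z) := hN.add_le _ _
      _ = 4 * N (2 ^ n • z) := by rw [← add_mul]; norm_num
      _ ≤ 4 * (4 ^ n * N z) := by gcongr
      _ = 4 ^ (n + 1) * N z := by rw [pow_succ', mul_assoc]

section Group

variable {G : Type*} [AddCommGroup G] [MeasurableSpace G]

-- The inequality `N y ≤ 2 N z + 2 N (z - y)` is averaged over `z` in `(y +ᵥ S) ∩ S`.
lemma measure_inter_mul_le [MeasurableAdd₂ G] [MeasurableNeg G] {ν : Measure G}
    [ν.IsAddLeftInvariant] {N : G → ℝ≥0∞} (hN : QuasiSubadditive N) (hm : Measurable N)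
    {S : Set G} (hS : MeasurableSet S) (y : G) :
    ν ((y +ᵥ S) ∩ S) * N y ≤ 4 * ∫⁻ z in S, N z ∂ν := by
  have hshift : ∫⁻ z in y +ᵥ S, N (z - y) ∂ν = ∫⁻ z in S, N z ∂ν := by
    have hpre : y +ᵥ S = (· - y) ⁻¹' S := by
      ext z; simp [mem_vadd_set_iff_neg_vadd_mem, sub_eq_neg_add]
    rw [hpre]
    exact (measurePreserving_sub_right ν y).setLIntegral_comp_preimage hS hm
  calc ν ((y +ᵥ S) ∩ S) * N y = ∫⁻ _ in (y +ᵥ S) ∩ S, N y ∂ν := by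
        rw [setLIntegral_const, mul_comm]
    _ ≤ ∫⁻ z in (y +ᵥ S) ∩ S, (2 * N z + 2 * N (z - y)) ∂ν := by
        refine lintegral_mono fun z => ?_
        simpa [← hN.neg (z - y)] using hN.add_le z (y - z)
    _ = 2 * ∫⁻ z in (y +ᵥ S) ∩ S, N z ∂ν + 2 * ∫⁻ z in (y +ᵥ S) ∩ S, N (z - y) ∂ν := by
        rw [lintegral_add_left (by fun_prop), lintegral_const_mul _ hm,
          lintegral_const_mul _ (by fun_prop)]
    _ ≤ 2 * ∫⁻ z in S, N z ∂ν + 2 * ∫⁻ z in y +ᵥ S, N (z - y) ∂ν := by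
        gcongr
        exacts [inter_subset_right, inter_subset_left]
    _ = 4 * ∫⁻ z in S, N z ∂ν := by rw [hshift, ← add_mul]; norm_num

end Group

end QuasiSubadditive

lemma eventually_half_measure_le_vadd_inter {G : Type*} [AddGroup G] [TopologicalSpace G]
    [IsTopologicalAddGroup G] [LocallyCompactSpace G] [T2Space G] [MeasurableSpace G]
    [BorelSpace G] {ν : Measure G} [ν.IsAddLeftInvariant] [IsFiniteMeasureOnCompacts ν]
    [ν.InnerRegularCompactLTTop] {S : Set G} (hS : IsCompact S) (hS0 : ν S ≠ 0) :
    ∀ᶠ y in 𝓝 (0 : G), ν S / (2 : ℝ≥0∞) ≤ ν ((y +ᵥ S) ∩ S) := by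
  have hdiff := (tendsto_measure_vadd_sdiff_isCompact_isClosed (μ := ν) hS hS.isClosed).eventually
    (gt_mem_nhds (ENNReal.half_pos hS0))
  filter_upwards [hdiff] with y hy
  by_contra! hinter
  have hsum : ν ((y +ᵥ S) ∩ S) + ν ((y +ᵥ S) \ S) = ν S := by
    rw [measure_inter_add_sdiff _ hS.measurableSet, measure_vadd]
  exact (ENNReal.add_lt_add hinter hy).ne (by rw [hsum, ENNReal.add_halves])

lemma exists_isCompact_forall_le_of_lintegral_ne_zero {G : Type*} [TopologicalSpace G]
    [MeasurableSpace G] {ν : Measure G} [ν.InnerRegular] {w : G → ℝ≥0∞} (hw : Measurable w)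
    (hw0 : ∫⁻ z, w z ∂ν ≠ 0) :
    ∃ c : ℝ≥0∞, c ≠ 0 ∧ c ≠ ∞ ∧ ∃ S, IsCompact S ∧ ν S ≠ 0 ∧ ∀ z ∈ S, c ≤ w z := by
  obtain ⟨n, hn⟩ : ∃ n : ℕ, ν {z | (n : ℝ≥0∞)⁻¹ ≤ w z} ≠ 0 := by
    by_contra! hnull
    refine hw0 ((lintegral_eq_zero_iff hw).2 ?_)
    filter_upwards [ae_all_iff.2 fun n => measure_eq_zero_iff_ae_notMem.1 (hnull n)] with z hz
    by_contra hpos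
    obtain ⟨n, hn⟩ := ENNReal.exists_inv_nat_lt hpos
    exact hz n hn.le
  obtain ⟨S, hSw, hS, hS0⟩ :=
    (measurableSet_le measurable_const hw).exists_lt_isCompact (pos_iff_ne_zero.2 hn)
  refine ⟨min (n : ℝ≥0∞)⁻¹ 1, by simp, by simp, S, hS, hS0.ne', fun z hz => ?_⟩
  exact (min_le_left _ _).trans (hSw hz)

lemma QuasiSubadditive.exists_eventually_le_mul_lintegral {G : Type*} [AddCommGroup G]
    [TopologicalSpace G] [IsTopologicalAddGroup G] [LocallyCompactSpace G] [T2Space G]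
    [MeasurableSpace G] [BorelSpace G] [MeasurableAdd₂ G] {ν : Measure G}
    [ν.IsAddLeftInvariant] [IsFiniteMeasureOnCompacts ν] [ν.InnerRegular] {w : G → ℝ≥0∞}
    (hw : Measurable w) (hw0 : ∫⁻ z, w z ∂ν ≠ 0) :
    ∃ Λ : ℝ≥0∞, Λ ≠ ∞ ∧ ∀ᶠ y in 𝓝 (0 : G), ∀ N : G → ℝ≥0∞, Measurable N →
      QuasiSubadditive N → N y ≤ Λ * ∫⁻ z, N z ∂ν.withDensity w := by
  obtain ⟨c, hc0, hc, S, hS, hS0, hSw⟩ := exists_isCompact_forall_le_of_lintegral_ne_zero hw hw0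
  have hhalf0 : ν S / 2 ≠ 0 := (ENNReal.half_pos hS0).ne'
  have hhalf : ν S / 2 ≠ ∞ := ENNReal.div_ne_top hS.measure_lt_top.ne two_ne_zero
  refine ⟨(ν S / 2)⁻¹ * (4 * c⁻¹), by finiteness, ?_⟩
  filter_upwards [eventually_half_measure_le_vadd_inter hS hS0] with y hy N hm hN
  have hdensity : c * ∫⁻ z in S, N z ∂ν ≤ ∫⁻ z, N z ∂ν.withDensity w := by
    rw [lintegral_withDensity_eq_lintegral_mul ν hw hm, ← lintegral_const_mul c hm]
    refine (setLIntegral_mono' hS.measurableSet fun z hz => ?_).trans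
      (setLIntegral_le_lintegral S _)
    exact mul_le_mul_left (hSw z hz) (N z)
  rw [mul_assoc, mul_assoc, ← ENNReal.mul_le_iff_le_inv hhalf0 hhalf]
  calc ν S / 2 * N y ≤ ν ((y +ᵥ S) ∩ S) * N y := by gcongr
    _ ≤ 4 * ∫⁻ z in S, N z ∂ν := hN.measure_inter_mul_le hm hS.measurableSet y
    _ ≤ 4 * (c⁻¹ * ∫⁻ z, N z ∂ν.withDensity w) := by
        gcongr
        exact (ENNReal.mul_le_iff_le_inv hc0 hc).1 hdensity

lemma QuasiSubadditive.exists_forall_mem_le_mul_lintegral {E : Type*} [NormedAddCommGroup E]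
    [NormedSpace ℝ E] [FiniteDimensional ℝ E] [MeasurableSpace E] [BorelSpace E]
    {ν : Measure E} [ν.IsAddHaarMeasure] {w : E → ℝ≥0∞} (hw : Measurable w)
    (hw0 : ∫⁻ z, w z ∂ν ≠ 0) {B : Set E} (hB : Bornology.IsBounded B) :
    ∃ Λ : ℝ≥0∞, Λ ≠ ∞ ∧ ∀ y ∈ B, ∀ N : E → ℝ≥0∞, Measurable N →
      QuasiSubadditive N → N y ≤ Λ * ∫⁻ z, N z ∂ν.withDensity w := by
  have : ProperSpace E := FiniteDimensional.proper_real E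
  obtain ⟨Λ, hΛ, hsmall⟩ := exists_eventually_le_mul_lintegral (ν := ν) hw hw0
  obtain ⟨r, hr, hball⟩ := Metric.eventually_nhds_iff.1 hsmall
  obtain ⟨R, hR⟩ := hB.exists_norm_le
  obtain ⟨n, hn⟩ := pow_unbounded_of_one_lt (R / r) one_lt_two
  refine ⟨4 ^ n * Λ, by finiteness, fun y hy N hm hN => ?_⟩
  set z : E := ((2 : ℝ) ^ n)⁻¹ • y with hz
  have hzr : dist z 0 < r := by
    rw [dist_zero_right, hz, norm_smul, norm_inv, norm_pow, Real.norm_two,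
      inv_mul_lt_iff₀ (by positivity)]
    exact (hR y hy).trans_lt ((div_lt_iff₀ hr).1 hn)
  have hzy : (2 ^ n : ℕ) • z = y := by
    rw [← Nat.cast_smul_eq_nsmul ℝ, Nat.cast_pow, Nat.cast_two, hz, smul_inv_smul₀ (by positivity)]
  calc N y = N (2 ^ n • z) := by rw [hzy]
    _ ≤ 4 ^ n * N z := hN.two_pow_nsmul_le z n
    _ ≤ 4 ^ n * (Λ * ∫⁻ z, N z ∂ν.withDensity w) := by gcongr; exact hball hzr N hm hN
    _ = 4 ^ n * Λ * ∫⁻ z, N z ∂ν.withDensity w := (mul_assoc _ _ _).symm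

/-- Invariance under the translations by `ℤ^d`; such functions stand for functions on the torus. -/
def IsLatticePeriodic {d : ℕ} {X : Type*} (f : (Fin d → ℝ) → X) : Prop :=
  ∀ ξ (k : Fin d → ℤ), f (ξ + fun i => (k i : ℝ)) = f ξ

/-- Lebesgue measure on the periodicity cell, standing for the Haar measure of the torus. -/
abbrev cubeMeasure (d : ℕ) : Measure (Fin d → ℝ) := volume.restrict (cube d)

section Periodic

variable {d : ℕ}

lemma measurableSet_cube : MeasurableSet (cube d) := .univ_pi fun _ => measurableSet_Ico

lemma isBounded_cube : Bornology.IsBounded (cube d) :=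
  Bornology.IsBounded.pi fun _ => Metric.isBounded_Ico 0 1

instance : IsProbabilityMeasure (cubeMeasure d) := ⟨by simp [cube, volume_pi, Measure.pi_pi]⟩

instance : Countable (Submodule.span ℤ (range (Pi.basisFun ℝ (Fin d)))).toAddSubgroup :=
  inferInstanceAs (Countable (Submodule.span ℤ (range (Pi.basisFun ℝ (Fin d)))))

lemma isAddFundamentalDomain_cube : IsAddFundamentalDomain
    (Submodule.span ℤ (range (Pi.basisFun ℝ (Fin d)))).toAddSubgroup (cube d) volume := by
  have h := ZSpan.isAddFundamentalDomain' (Pi.basisFun ℝ (Fin d)) volume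
  rwa [ZSpan.fundamentalDomain_pi_basisFun] at h

namespace IsLatticePeriodic

lemma comp {X Y : Type*} {f : (Fin d → ℝ) → X} (hf : IsLatticePeriodic f) (g : X → Y) :
    IsLatticePeriodic fun ξ => g (f ξ) :=
  fun ξ k => congrArg g (hf ξ k)

lemma comp_add_right {X : Type*} {f : (Fin d → ℝ) → X} (hf : IsLatticePeriodic f)
    (z : Fin d → ℝ) : IsLatticePeriodic fun ξ => f (ξ + z) :=
  fun _ k => (congrArg f (add_right_comm _ _ _)).trans (hf _ k)

lemma comp₂ {X Y Z : Type*} {f : (Fin d → ℝ) → X} {g : (Fin d → ℝ) → Y}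
    (hf : IsLatticePeriodic f) (hg : IsLatticePeriodic g) (h : X → Y → Z) :
    IsLatticePeriodic fun ξ => h (f ξ) (g ξ) :=
  fun ξ k => congrArg₂ h (hf ξ k) (hg ξ k)

lemma vadd_eq {X : Type*} {f : (Fin d → ℝ) → X} (hf : IsLatticePeriodic f)
    (g : (Submodule.span ℤ (range (Pi.basisFun ℝ (Fin d)))).toAddSubgroup) (ξ : Fin d → ℝ) :
    f (g +ᵥ ξ) = f ξ := by
  choose k hk using ((Pi.basisFun ℝ (Fin d)).mem_span_iff_repr_mem ℤ (g : Fin d → ℝ)).1 g.2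
  have hg : (g : Fin d → ℝ) = fun i => (k i : ℝ) := funext fun i => by simpa using (hk i).symm
  rw [AddSubgroup.vadd_def, vadd_eq_add, hg, add_comm, hf]

lemma lintegral_add_right {f : (Fin d → ℝ) → ℝ≥0∞} (hf : IsLatticePeriodic f)
    (z : Fin d → ℝ) : ∫⁻ ξ, f (ξ + z) ∂cubeMeasure d = ∫⁻ ξ, f ξ ∂cubeMeasure d := by
  have hpre : (· + z) ⁻¹' (z +ᵥ cube d) = cube d := by
    ext x; simp [mem_vadd_set_iff_neg_vadd_mem, add_comm]
  calc ∫⁻ ξ, f (ξ + z) ∂cubeMeasure d = ∫⁻ ξ in z +ᵥ cube d, f ξ := by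
        rw [← (measurePreserving_add_right volume z).setLIntegral_comp_preimage_emb
          (measurableEmbedding_addRight z) f, hpre]
    _ = ∫⁻ ξ, f ξ ∂cubeMeasure d :=
        (isAddFundamentalDomain_cube.vadd_of_comm z).setLIntegral_eq isAddFundamentalDomain_cube f
          hf.vadd_eq

lemma integral_add_right {f : (Fin d → ℝ) → ℝ} (hf : IsLatticePeriodic f)
    (z : Fin d → ℝ) : ∫ ξ, f (ξ + z) ∂cubeMeasure d = ∫ ξ, f ξ ∂cubeMeasure d := by
  have hpre : (· + z) ⁻¹' (z +ᵥ cube d) = cube d := by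
    ext x; simp [mem_vadd_set_iff_neg_vadd_mem, add_comm]
  calc ∫ ξ, f (ξ + z) ∂cubeMeasure d = ∫ ξ in z +ᵥ cube d, f ξ := by
        rw [← (measurePreserving_add_right volume z).setIntegral_preimage_emb
          (measurableEmbedding_addRight z) f, hpre]
    _ = ∫ ξ, f ξ ∂cubeMeasure d :=
        (isAddFundamentalDomain_cube.vadd_of_comm z).setIntegral_eq isAddFundamentalDomain_cube
          hf.vadd_eq

end IsLatticePeriodic

/-- The squared `L²` modulus of continuity on the torus,
`z ↦ ‖v (· + z) - v‖²` in `L²(𝕋^d)`. -/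
def translationEnergy (v : (Fin d → ℝ) → ℝ) (z : Fin d → ℝ) : ℝ≥0∞ :=
  ∫⁻ ξ, ‖v (ξ + z) - v ξ‖ₑ ^ 2 ∂cubeMeasure d

variable {v : (Fin d → ℝ) → ℝ}

lemma IsLatticePeriodic.enorm_increment_sq (hp : IsLatticePeriodic v) (z : Fin d → ℝ) :
    IsLatticePeriodic fun ξ => ‖v (ξ + z) - v ξ‖ₑ ^ 2 :=
  (hp.comp_add_right z).comp₂ hp fun x y => ‖x - y‖ₑ ^ 2

lemma measurable_translationEnergy (hv : Measurable v) : Measurable (translationEnergy v) :=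
  Measurable.lintegral_prod_right' (f := fun p : (Fin d → ℝ) × (Fin d → ℝ) =>
    ‖v (p.2 + p.1) - v p.2‖ₑ ^ 2) (by fun_prop)

lemma quasiSubadditive_translationEnergy (hv : Measurable v) (hp : IsLatticePeriodic v) :
    QuasiSubadditive (translationEnergy v) where
  neg z := by
    simp only [translationEnergy]
    rw [← (hp.enorm_increment_sq (-z)).lintegral_add_right z]
    simp only [add_neg_cancel_right, ← edist_eq_enorm_sub, edist_comm (v _) (v (_ + z))]
  add_le y z := by
    calc translationEnergy v (y + z)
        ≤ ∫⁻ ξ, (2 * ‖v (ξ + z + y) - v (ξ + z)‖ₑ ^ 2 + 2 * ‖v (ξ + z) - v ξ‖ₑ ^ 2)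
            ∂cubeMeasure d := by
          refine lintegral_mono fun ξ => ?_
          simpa [add_comm y z, add_assoc] using
            enorm_add_sq_le (v (ξ + z + y) - v (ξ + z)) (v (ξ + z) - v ξ)
      _ = 2 * translationEnergy v y + 2 * translationEnergy v z := by
          rw [lintegral_add_left (by fun_prop), lintegral_const_mul _ (by fun_prop),
            lintegral_const_mul _ (by fun_prop),
            (hp.enorm_increment_sq y).lintegral_add_right z]
          rfl

lemma translationEnergy_le (hv : Measurable v) (hp : IsLatticePeriodic v) (z : Fin d → ℝ) :
    translationEnergy v z ≤ 4 * ∫⁻ ξ, ‖v ξ‖ₑ ^ 2 ∂cubeMeasure d := by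
  calc translationEnergy v z
      ≤ ∫⁻ ξ, (2 * ‖v (ξ + z)‖ₑ ^ 2 + 2 * ‖v ξ‖ₑ ^ 2) ∂cubeMeasure d := by
        refine lintegral_mono fun ξ => ?_
        simpa [sub_eq_add_neg] using enorm_add_sq_le (v (ξ + z)) (-v ξ)
    _ = 2 * ∫⁻ ξ, ‖v (ξ + z)‖ₑ ^ 2 ∂cubeMeasure d + 2 * ∫⁻ ξ, ‖v ξ‖ₑ ^ 2 ∂cubeMeasure d := by
        rw [lintegral_add_left (by fun_prop), lintegral_const_mul _ (by fun_prop),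
          lintegral_const_mul _ (by fun_prop)]
    _ = 4 * ∫⁻ ξ, ‖v ξ‖ₑ ^ 2 ∂cubeMeasure d := by
        rw [(hp.comp (‖·‖ₑ ^ 2)).lintegral_add_right z, ← add_mul]
        norm_num

lemma lintegral_enorm_increment_sq {α : Measure (Fin d → ℝ)} [SFinite α] (hv : Measurable v) :
    ∫⁻ p : (Fin d → ℝ) × (Fin d → ℝ), ‖v (p.1 + p.2) - v p.1‖ₑ ^ 2 ∂(cubeMeasure d).prod α =
      ∫⁻ z, translationEnergy v z ∂α :=
  lintegral_prod_symm' _ (by fun_prop)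

lemma memLp_increment {α : Measure (Fin d → ℝ)} [IsFiniteMeasure α] (hv : Measurable v)
    (hp : IsLatticePeriodic v) (hv2 : MemLp v 2 (cubeMeasure d)) :
    MemLp (fun p : (Fin d → ℝ) × (Fin d → ℝ) => v (p.1 + p.2) - v p.1) 2
      ((cubeMeasure d).prod α) := by
  have hfin := (memLp_two_iff_lintegral_enorm_sq_lt_top hv2.1).1 hv2
  refine (memLp_two_iff_lintegral_enorm_sq_lt_top (by fun_prop)).2 ?_
  calc _ = ∫⁻ z, translationEnergy v z ∂α := lintegral_enorm_increment_sq hv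
    _ ≤ ∫⁻ _, 4 * ∫⁻ ξ, ‖v ξ‖ₑ ^ 2 ∂cubeMeasure d ∂α :=
        lintegral_mono fun z => translationEnergy_le hv hp z
    _ < ∞ := by rw [lintegral_const]; finiteness

lemma evariance_le_lintegral_translationEnergy (hv : Measurable v) (hp : IsLatticePeriodic v)
    (hv2 : MemLp v 2 (cubeMeasure d)) :
    eVar[v; cubeMeasure d] ≤ ∫⁻ z, translationEnergy v z ∂cubeMeasure d := by
  calc eVar[v; cubeMeasure d] = ∫⁻ _, eVar[v; cubeMeasure d] ∂cubeMeasure d := by simp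
    _ ≤ ∫⁻ ξ, ∫⁻ z, ‖v z - v ξ‖ₑ ^ 2 ∂cubeMeasure d ∂cubeMeasure d :=
        lintegral_mono fun ξ => evariance_le_lintegral_enorm_sub_sq hv2 (v ξ)
    _ = ∫⁻ ξ, ∫⁻ z, ‖v (z + ξ) - v ξ‖ₑ ^ 2 ∂cubeMeasure d ∂cubeMeasure d :=
        lintegral_congr fun ξ => ((hp.comp (‖· - v ξ‖ₑ ^ 2)).lintegral_add_right ξ).symm
    _ = ∫⁻ z, translationEnergy v z ∂cubeMeasure d := by
        simp only [add_comm _ (_ : Fin d → ℝ)]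
        exact lintegral_lintegral_swap (by fun_prop)

lemma exists_evariance_le_mul_lintegral_translationEnergy {w : (Fin d → ℝ) → ℝ≥0∞}
    (hw : Measurable w) (hw0 : ∫⁻ z, w z ≠ 0) :
    ∃ Λ : ℝ≥0∞, Λ ≠ ∞ ∧ ∀ v : (Fin d → ℝ) → ℝ, Measurable v → IsLatticePeriodic v →
      MemLp v 2 (cubeMeasure d) →
      eVar[v; cubeMeasure d] ≤ Λ * ∫⁻ z, translationEnergy v z ∂volume.withDensity w := by
  obtain ⟨Λ, hΛ, hbound⟩ :=
    QuasiSubadditive.exists_forall_mem_le_mul_lintegral hw hw0 (isBounded_cube (d := d))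
  refine ⟨Λ, hΛ, fun v hv hp hv2 => (evariance_le_lintegral_translationEnergy hv hp hv2).trans ?_⟩
  calc ∫⁻ z, translationEnergy v z ∂cubeMeasure d
      ≤ ∫⁻ _, (Λ * ∫⁻ z, translationEnergy v z ∂volume.withDensity w) ∂cubeMeasure d :=
        setLIntegral_mono' measurableSet_cube fun z hz =>
          hbound z hz _ (measurable_translationEnergy hv) (quasiSubadditive_translationEnergy hv hp)
    _ = Λ * ∫⁻ z, translationEnergy v z ∂volume.withDensity w := by simp

lemma exists_mul_variance_le_integral_increment_sq {w : (Fin d → ℝ) → ℝ≥0∞}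
    [IsFiniteMeasure (volume.withDensity w)] (hw : Measurable w) (hw0 : ∫⁻ z, w z ≠ 0) :
    ∃ l : ℝ, 0 < l ∧ ∀ v : (Fin d → ℝ) → ℝ, Measurable v → IsLatticePeriodic v →
      MemLp v 2 (cubeMeasure d) → l * Var[v; cubeMeasure d] ≤
        ∫ p : (Fin d → ℝ) × (Fin d → ℝ), (v (p.1 + p.2) - v p.1) ^ 2
          ∂(cubeMeasure d).prod (volume.withDensity w) := by
  obtain ⟨Λ, hΛ, hpoincare⟩ := exists_evariance_le_mul_lintegral_translationEnergy hw hw0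
  have hΛ0 : 0 ≤ Λ.toReal := ENNReal.toReal_nonneg
  refine ⟨(Λ.toReal + 1)⁻¹, by positivity, fun v hv hp hv2 => ?_⟩
  set D := ∫ p : (Fin d → ℝ) × (Fin d → ℝ), (v (p.1 + p.2) - v p.1) ^ 2
    ∂(cubeMeasure d).prod (volume.withDensity w)
  have hD : 0 ≤ D := integral_nonneg fun _ => sq_nonneg _
  have hvar : Var[v; cubeMeasure d] ≤ Λ.toReal * D := by
    refine (ENNReal.ofReal_le_ofReal_iff (mul_nonneg hΛ0 hD)).1 ?_
    rw [ofReal_variance hv2, ENNReal.ofReal_mul hΛ0, ENNReal.ofReal_toReal hΛ,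
      ofReal_integral_sq (memLp_increment hv hp hv2), lintegral_enorm_increment_sq hv]
    exact hpoincare v hv hp hv2
  rw [inv_mul_le_iff₀ (by positivity)]
  exact hvar.trans (by gcongr; linarith)

end Periodic

/-- A symmetric, uniformly elliptic coefficient on the torus. Periodicity is only asked for under
simultaneous translations of both arguments. -/
structure IsJumpCoefficient {d : ℕ} (c M : ℝ) (m : (Fin d → ℝ) → (Fin d → ℝ) → ℝ) : Prop where
  measurable : Measurable fun p : (Fin d → ℝ) × (Fin d → ℝ) => m p.1 p.2
  periodic : ∀ ξ η (k : Fin d → ℤ), m (ξ + fun i => (k i : ℝ)) (η + fun i => (k i : ℝ)) = m ξ η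
  symm : ∀ ξ η, m ξ η = m η ξ
  pos : 0 < c
  lower_le : ∀ ξ η, c ≤ m ξ η
  le_upper : ∀ ξ η, m ξ η ≤ M

/-- The operator `A` with jump law `α` in place of the density `a`, written in terms of the jump
`z = η - ξ`. -/
def jumpOperator {d : ℕ} (α : Measure (Fin d → ℝ)) (m : (Fin d → ℝ) → (Fin d → ℝ) → ℝ)
    (v : (Fin d → ℝ) → ℝ) (ξ : Fin d → ℝ) : ℝ :=
  ∫ z, m ξ (ξ + z) * (v (ξ + z) - v ξ) ∂α

section JumpOperator

variable {d : ℕ} {α : Measure (Fin d → ℝ)} {c M : ℝ}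
  {m : (Fin d → ℝ) → (Fin d → ℝ) → ℝ} {v φ : (Fin d → ℝ) → ℝ}

lemma IsJumpCoefficient.measurable_comp_add (hm : IsJumpCoefficient c M m) :
    Measurable fun p : (Fin d → ℝ) × (Fin d → ℝ) => m p.1 (p.1 + p.2) :=
  hm.measurable.comp (measurable_fst.prodMk (measurable_fst.add measurable_snd))

lemma IsJumpCoefficient.norm_le (hm : IsJumpCoefficient c M m) (ξ η : Fin d → ℝ) :
    ‖m ξ η‖ ≤ M := by
  rw [Real.norm_of_nonneg (hm.pos.le.trans (hm.lower_le ξ η))]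
  exact hm.le_upper ξ η

lemma integral_prod_reflect [SFinite α] [α.IsNegInvariant]
    {F : (Fin d → ℝ) × (Fin d → ℝ) → ℝ} (hper : ∀ z, IsLatticePeriodic fun ξ => F (ξ, z))
    (hF : Integrable F ((cubeMeasure d).prod α))
    (hF' : Integrable (fun p => F (p.1 + p.2, -p.2)) ((cubeMeasure d).prod α)) :
    ∫ p, F (p.1 + p.2, -p.2) ∂(cubeMeasure d).prod α = ∫ p, F p ∂(cubeMeasure d).prod α := by
  calc ∫ p, F (p.1 + p.2, -p.2) ∂(cubeMeasure d).prod α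
      = ∫ z, ∫ ξ, F (ξ + z, -z) ∂cubeMeasure d ∂α := integral_prod_symm _ hF'
    _ = ∫ z, ∫ ξ, F (ξ, -z) ∂cubeMeasure d ∂α :=
        integral_congr_ae (ae_of_all _ fun z => (hper (-z)).integral_add_right z)
    _ = ∫ z, ∫ ξ, F (ξ, z) ∂cubeMeasure d ∂α := integral_neg_eq_self (fun z => ∫ ξ, F (ξ, z)
        ∂cubeMeasure d) α
    _ = ∫ p, F p ∂(cubeMeasure d).prod α := (integral_prod_symm _ hF).symm

lemma IsJumpCoefficient.integrable_mul_increment_mul [IsFiniteMeasure α]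
    (hm : IsJumpCoefficient c M m) (hv : Measurable v) (hvp : IsLatticePeriodic v)
    (hv2 : MemLp v 2 (cubeMeasure d)) {g : (Fin d → ℝ) × (Fin d → ℝ) → ℝ}
    (hg : MemLp g 2 ((cubeMeasure d).prod α)) :
    Integrable (fun p => m p.1 (p.1 + p.2) * (v (p.1 + p.2) - v p.1) * g p)
      ((cubeMeasure d).prod α) := by
  have h := ((memLp_increment hv hvp hv2).integrable_mul hg).bdd_mul
    hm.measurable_comp_add.aestronglyMeasurable (ae_of_all _ fun p => hm.norm_le p.1 (p.1 + p.2))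
  simpa only [mul_assoc, Pi.mul_apply] using h

lemma integral_jumpOperator_mul [IsFiniteMeasure α] [α.IsNegInvariant]
    (hm : IsJumpCoefficient c M m) (hv : Measurable v) (hvp : IsLatticePeriodic v)
    (hv2 : MemLp v 2 (cubeMeasure d)) (hφ : Measurable φ) (hφp : IsLatticePeriodic φ)
    (hφ2 : MemLp φ 2 (cubeMeasure d)) :
    ∫ ξ, jumpOperator α m v ξ * φ ξ ∂cubeMeasure d =
      -(1 / 2) * ∫ p : (Fin d → ℝ) × (Fin d → ℝ), m p.1 (p.1 + p.2) *
        (v (p.1 + p.2) - v p.1) * (φ (p.1 + p.2) - φ p.1) ∂(cubeMeasure d).prod α := by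
  set j : (Fin d → ℝ) × (Fin d → ℝ) → ℝ := fun p => m p.1 (p.1 + p.2) * (v (p.1 + p.2) - v p.1)
  have hφfst : MemLp (fun p : (Fin d → ℝ) × (Fin d → ℝ) => φ p.1) 2 ((cubeMeasure d).prod α) :=
    hφ2.comp_fst α
  have hjφ : Integrable (fun p => j p * φ p.1) ((cubeMeasure d).prod α) :=
    hm.integrable_mul_increment_mul hv hvp hv2 hφfst
  have hjδ : Integrable (fun p => j p * (φ (p.1 + p.2) - φ p.1)) ((cubeMeasure d).prod α) :=
    hm.integrable_mul_increment_mul hv hvp hv2 (memLp_increment hφ hφp hφ2)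
  have hsum : (fun p => j p * φ (p.1 + p.2)) =
      fun p => j p * (φ (p.1 + p.2) - φ p.1) + j p * φ p.1 := by
    funext p; ring
  have hjφ' : Integrable (fun p => j p * φ (p.1 + p.2)) ((cubeMeasure d).prod α) :=
    hsum ▸ hjδ.add hjφ
  have hj : ∀ ξ z, j (ξ + z, -z) = -j (ξ, z) := fun ξ z => by
    simp only [j, add_neg_cancel_right, hm.symm (ξ + z) ξ]; ring
  have hjper : ∀ z, IsLatticePeriodic fun ξ => j (ξ, z) * φ ξ := fun z ξ k => by
    simp only [j, add_right_comm ξ _ z, hm.periodic, hvp _ k, hφp _ k]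
  have hflip : ∫ p, j p * φ p.1 ∂(cubeMeasure d).prod α =
      -∫ p, j p * φ (p.1 + p.2) ∂(cubeMeasure d).prod α := by
    rw [← integral_neg, ← integral_prod_reflect hjper hjφ (by simpa only [hj, neg_mul] using
      hjφ'.fun_neg)]
    simp only [hj, neg_mul]
  have hfubini : ∫ ξ, jumpOperator α m v ξ * φ ξ ∂cubeMeasure d =
      ∫ p, j p * φ p.1 ∂(cubeMeasure d).prod α := by
    rw [integral_prod _ hjφ]
    simp only [integral_mul_const]
    rfl
  rw [hsum, integral_add hjδ hjφ] at hflip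
  rw [hfubini]
  linarith

lemma integral_jumpOperator [IsFiniteMeasure α] [α.IsNegInvariant]
    (hm : IsJumpCoefficient c M m) (hv : Measurable v) (hvp : IsLatticePeriodic v)
    (hv2 : MemLp v 2 (cubeMeasure d)) : ∫ ξ, jumpOperator α m v ξ ∂cubeMeasure d = 0 := by
  simpa using integral_jumpOperator_mul (φ := fun _ => 1) hm hv hvp hv2 measurable_const
    (fun _ _ => rfl) (memLp_const 1)

lemma integral_jumpOperator_mul_self_le [IsFiniteMeasure α] [α.IsNegInvariant]
    (hm : IsJumpCoefficient c M m) (hv : Measurable v) (hvp : IsLatticePeriodic v)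
    (hv2 : MemLp v 2 (cubeMeasure d)) :
    ∫ ξ, jumpOperator α m v ξ * v ξ ∂cubeMeasure d ≤
      -(c / 2) * ∫ p : (Fin d → ℝ) × (Fin d → ℝ), (v (p.1 + p.2) - v p.1) ^ 2
        ∂(cubeMeasure d).prod α := by
  have hδ := memLp_increment (α := α) hv hvp hv2
  have hlower : c * ∫ p : (Fin d → ℝ) × (Fin d → ℝ), (v (p.1 + p.2) - v p.1) ^ 2
      ∂(cubeMeasure d).prod α ≤ ∫ p : (Fin d → ℝ) × (Fin d → ℝ), m p.1 (p.1 + p.2) *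
        (v (p.1 + p.2) - v p.1) * (v (p.1 + p.2) - v p.1) ∂(cubeMeasure d).prod α := by
    rw [← integral_const_mul]
    refine integral_mono (hδ.integrable_sq.const_mul c)
      (hm.integrable_mul_increment_mul hv hvp hv2 hδ) fun p => ?_
    dsimp only
    rw [mul_assoc, ← sq]
    exact mul_le_mul_of_nonneg_right (hm.lower_le _ _) (sq_nonneg _)
  rw [integral_jumpOperator_mul hm hv hvp hv2 hv hvp hv2]
  linarith

lemma lintegral_enorm_sq_jumpOperator_le [IsProbabilityMeasure α]
    (hm : IsJumpCoefficient c M m) (hv : Measurable v) (hvp : IsLatticePeriodic v) :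
    ∫⁻ ξ, ‖jumpOperator α m v ξ‖ₑ ^ 2 ∂cubeMeasure d ≤
      ENNReal.ofReal M ^ 2 * (4 * ∫⁻ ξ, ‖v ξ‖ₑ ^ 2 ∂cubeMeasure d) := by
  have hmeas : Measurable fun p : (Fin d → ℝ) × (Fin d → ℝ) =>
      m p.1 (p.1 + p.2) * (v (p.1 + p.2) - v p.1) := hm.measurable_comp_add.mul (by fun_prop)
  calc ∫⁻ ξ, ‖jumpOperator α m v ξ‖ₑ ^ 2 ∂cubeMeasure d
      ≤ ∫⁻ ξ, ∫⁻ z, ‖m ξ (ξ + z) * (v (ξ + z) - v ξ)‖ₑ ^ 2 ∂α ∂cubeMeasure d :=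
        lintegral_mono fun ξ => enorm_integral_sq_le_lintegral_enorm_sq
          (hmeas.comp measurable_prodMk_left).aestronglyMeasurable
    _ ≤ ∫⁻ ξ, ∫⁻ z, ENNReal.ofReal M ^ 2 * ‖v (ξ + z) - v ξ‖ₑ ^ 2 ∂α ∂cubeMeasure d := by
        gcongr with ξ z
        rw [enorm_mul, mul_pow, ← ofReal_norm (m _ _)]
        gcongr
        exact hm.norm_le _ _
    _ = ENNReal.ofReal M ^ 2 * ∫⁻ z, translationEnergy v z ∂α := by
        rw [lintegral_lintegral_swap (by fun_prop), ← lintegral_const_mul _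
          (measurable_translationEnergy hv)]
        exact lintegral_congr fun z => lintegral_const_mul _ (by fun_prop)
    _ ≤ ENNReal.ofReal M ^ 2 * ∫⁻ _, 4 * ∫⁻ ξ, ‖v ξ‖ₑ ^ 2 ∂cubeMeasure d ∂α := by
        gcongr with z
        exact translationEnergy_le hv hvp z
    _ = ENNReal.ofReal M ^ 2 * (4 * ∫⁻ ξ, ‖v ξ‖ₑ ^ 2 ∂cubeMeasure d) := by simp

end JumpOperator

/-- The law of the jumps of `A`: the measure with density `a`. -/
abbrev jumpLaw {d : ℕ} (a : (Fin d → ℝ) → ℝ) : Measure (Fin d → ℝ) :=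
  volume.withDensity fun z => ENNReal.ofReal (a z)

section JumpLaw

variable {d : ℕ} {a : (Fin d → ℝ) → ℝ}

lemma lintegral_ofReal_eq_one (hnonneg : ∀ z, 0 ≤ a z) (hint : Integrable a)
    (hmass : ∫ z, a z = 1) : ∫⁻ z, ENNReal.ofReal (a z) = 1 := by
  rw [← ofReal_integral_eq_lintegral_ofReal hint (ae_of_all _ hnonneg), hmass, ENNReal.ofReal_one]

lemma isProbabilityMeasure_jumpLaw (hnonneg : ∀ z, 0 ≤ a z) (hint : Integrable a)
    (hmass : ∫ z, a z = 1) : IsProbabilityMeasure (jumpLaw a) :=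
  ⟨by rw [jumpLaw, withDensity_apply _ .univ, setLIntegral_univ,
    lintegral_ofReal_eq_one hnonneg hint hmass]⟩

lemma isNegInvariant_jumpLaw (hsymm : ∀ z, a (-z) = a z) : (jumpLaw a).IsNegInvariant := by
  refine ⟨Measure.ext fun s hs => ?_⟩
  rw [Measure.neg, Measure.map_apply measurable_neg hs, jumpLaw,
    withDensity_apply _ (measurable_neg hs), withDensity_apply _ hs,
    ← (Measure.measurePreserving_neg volume).setLIntegral_comp_preimage_emb
      (MeasurableEquiv.neg _).measurableEmbedding]
  simp only [preimage_preimage, neg_neg, preimage_id', hsymm]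

lemma Aop_eq_jumpOperator (hmeas : Measurable a) (hnonneg : ∀ z, 0 ≤ a z)
    (hsymm : ∀ z, a (-z) = a z) (μ : (Fin d → ℝ) → (Fin d → ℝ) → ℝ → ℝ) (s : ℝ)
    (v : (Fin d → ℝ) → ℝ) :
    Aop a μ s v = jumpOperator (jumpLaw a) (fun ξ η => μ ξ η s) v := by
  funext ξ
  calc Aop a μ s v ξ = ∫ z, a (ξ - (ξ + z)) * μ ξ (ξ + z) s * (v (ξ + z) - v ξ) :=
        (integral_add_left_eq_self _ ξ).symm
    _ = ∫ z, (ENNReal.ofReal (a z)).toReal • (μ ξ (ξ + z) s * (v (ξ + z) - v ξ)) := by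
        simp only [sub_add_cancel_left, hsymm, ENNReal.toReal_ofReal (hnonneg _), smul_eq_mul,
          mul_assoc]
    _ = jumpOperator (jumpLaw a) (fun ξ η => μ ξ η s) v ξ :=
        (integral_withDensity_eq_integral_toReal_smul hmeas.ennreal_ofReal
          (ae_of_all _ fun _ => ENNReal.ofReal_lt_top) _).symm

lemma measurable_Aop {μ : (Fin d → ℝ) → (Fin d → ℝ) → ℝ → ℝ} {β : (Fin d → ℝ) → ℝ → ℝ}
    (ha : Measurable a)
    (hμ : Measurable fun p : (Fin d → ℝ) × (Fin d → ℝ) × ℝ => μ p.1 p.2.1 p.2.2)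
    (hβ : Measurable fun p : (Fin d → ℝ) × ℝ => β p.1 p.2) :
    Measurable fun p : (Fin d → ℝ) × ℝ => Aop a μ p.2 (fun η => β η p.2) p.1 := by
  have hμ' : Measurable fun p : ((Fin d → ℝ) × ℝ) × (Fin d → ℝ) => μ p.1.1 p.2 p.1.2 :=
    hμ.comp (by fun_prop : Measurable fun p : ((Fin d → ℝ) × ℝ) × (Fin d → ℝ) =>
      (p.1.1, p.2, p.1.2))
  have hβ' : Measurable fun p : ((Fin d → ℝ) × ℝ) × (Fin d → ℝ) => β p.2 p.1.2 :=
    hβ.comp (by fun_prop : Measurable fun p : ((Fin d → ℝ) × ℝ) × (Fin d → ℝ) => (p.2, p.1.2))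
  have hkernel : Measurable fun p : ((Fin d → ℝ) × ℝ) × (Fin d → ℝ) =>
      a (p.1.1 - p.2) * μ p.1.1 p.2 p.1.2 * (β p.2 p.1.2 - β p.1.1 p.1.2) :=
    ((ha.comp (measurable_fst.fst.sub measurable_snd)).mul hμ').mul
      (hβ'.sub (hβ.comp measurable_fst))
  exact hkernel.stronglyMeasurable.integral_prod_right'.measurable

end JumpLaw

/-- Lebesgue measure on one time period. -/
abbrev periodMeasure : Measure ℝ := volume.restrict (Ioc (0 : ℝ) 1)

instance : IsProbabilityMeasure periodMeasure := ⟨by simp⟩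

section Primitive

variable {f g h : ℝ → ℝ}

lemma intervalIntegrable_of_integrable_periodMeasure (hh : Integrable h periodMeasure) {s t : ℝ}
    (hs : s ∈ Icc (0 : ℝ) 1) (ht : t ∈ Icc (0 : ℝ) 1) : IntervalIntegrable h volume s t := by
  refine ((intervalIntegrable_iff_integrableOn_Ioc_of_le zero_le_one).2 hh).mono_set ?_
  rw [uIcc_of_le zero_le_one]
  exact uIcc_subset_Icc hs ht

lemma sq_eq_add_integral_of_eq_add_integral (hh : Integrable h periodMeasure)
    (hf : ∀ s ∈ Icc (0 : ℝ) 1, f s = f 0 + ∫ τ in (0 : ℝ)..s, h τ) {s : ℝ}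
    (hs : s ∈ Icc (0 : ℝ) 1) : f s ^ 2 = f 0 ^ 2 + ∫ τ in (0 : ℝ)..s, 2 * (f τ * h τ) := by
  have hhs : IntervalIntegrable h volume 0 s :=
    intervalIntegrable_of_integrable_periodMeasure hh (left_mem_Icc.2 zero_le_one) hs
  set K : ℝ → ℝ := fun x => ∫ τ in (0 : ℝ)..x, h τ
  have hK : AbsolutelyContinuousOnInterval K 0 s :=
    hhs.absolutelyContinuousOnInterval_intervalIntegral left_mem_uIcc
  have hderiv : ∫ τ in (0 : ℝ)..s, (deriv K τ * K τ + K τ * deriv K τ) =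
      ∫ τ in (0 : ℝ)..s, 2 * (K τ * h τ) := by
    refine intervalIntegral.integral_congr_ae ?_
    filter_upwards [hhs.ae_hasDerivAt_integral] with τ hτ hmem
    rw [(hτ (uIoc_subset_uIcc hmem) 0 left_mem_uIcc).deriv]
    ring
  have hsq : ∫ τ in (0 : ℝ)..s, 2 * (K τ * h τ) = K s ^ 2 := by
    rw [← hderiv, hK.integral_deriv_mul_eq_sub hK]
    simp [K, sq]
  calc f s ^ 2 = f 0 ^ 2 + (2 * f 0 * K s + K s ^ 2) := by rw [hf s hs]; ring
    _ = f 0 ^ 2 + ∫ τ in (0 : ℝ)..s, (2 * f 0 * h τ + 2 * (K τ * h τ)) := by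
      rw [intervalIntegral.integral_add (hhs.const_mul _)
        ((hhs.continuousOn_mul hK.continuousOn).const_mul _), hsq,
        intervalIntegral.integral_const_mul]
    _ = f 0 ^ 2 + ∫ τ in (0 : ℝ)..s, 2 * (f τ * h τ) := by
      congr 1
      refine intervalIntegral.integral_congr fun τ hτ => ?_
      rw [uIcc_of_le hs.1] at hτ
      rw [hf τ ⟨hτ.1, hτ.2.trans hs.2⟩]
      ring

lemma integral_eq_zero_of_periodic
    (hf : ∀ s ∈ Icc (0 : ℝ) 1, f s = f 0 + ∫ τ in (0 : ℝ)..s, h τ) (hper : f 1 = f 0) :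
    ∫ τ, h τ ∂periodMeasure = 0 := by
  have h1 := hf 1 (right_mem_Icc.2 zero_le_one)
  rwa [hper, left_eq_add, intervalIntegral.integral_of_le zero_le_one] at h1

lemma sub_eq_setIntegral (hh : Integrable h periodMeasure)
    (hf : ∀ s ∈ Icc (0 : ℝ) 1, f s = f 0 + ∫ τ in (0 : ℝ)..s, h τ) {s t : ℝ} (h0s : 0 ≤ s)
    (hst : s ≤ t) (ht1 : t ≤ 1) : f t - f s = ∫ τ in Ioc s t, h τ ∂periodMeasure := by
  have hs : s ∈ Icc (0 : ℝ) 1 := ⟨h0s, hst.trans ht1⟩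
  have ht : t ∈ Icc (0 : ℝ) 1 := ⟨h0s.trans hst, ht1⟩
  have h0 : (0 : ℝ) ∈ Icc (0 : ℝ) 1 := left_mem_Icc.2 zero_le_one
  rw [Measure.restrict_restrict_of_subset (Ioc_subset_Ioc h0s ht1),
    ← intervalIntegral.integral_of_le hst, hf s hs, hf t ht, add_sub_add_left_eq_sub,
    intervalIntegral.integral_interval_sub_left
      (intervalIntegrable_of_integrable_periodMeasure hh h0 ht)
      (intervalIntegrable_of_integrable_periodMeasure hh h0 hs)]

-- By periodicity `f s - f t` is the integral of `h` over the arc of the circle leading from `t`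
-- to `s`.
lemma sub_le_integral_of_periodic (hh : Integrable h periodMeasure)
    (hg : Integrable g periodMeasure)
    (hf : ∀ s ∈ Icc (0 : ℝ) 1, f s = f 0 + ∫ τ in (0 : ℝ)..s, h τ) (hper : f 1 = f 0)
    (hle : h ≤ᵐ[periodMeasure] g) (hg0 : 0 ≤ᵐ[periodMeasure] g) {s t : ℝ}
    (hs : s ∈ Icc (0 : ℝ) 1) (ht : t ∈ Icc (0 : ℝ) 1) :
    f s - f t ≤ ∫ τ, g τ ∂periodMeasure := by
  obtain ⟨arc, harc⟩ : ∃ arc, f s - f t = ∫ τ in arc, h τ ∂periodMeasure := by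
    rcases le_total t s with hts | hst
    · exact ⟨Ioc t s, sub_eq_setIntegral hh hf ht.1 hts hs.2⟩
    · refine ⟨(Ioc s t)ᶜ, ?_⟩
      have hcompl := integral_add_compl (measurableSet_Ioc (a := s) (b := t)) hh
      rw [integral_eq_zero_of_periodic hf hper, ← sub_eq_setIntegral hh hf hs.1 hst ht.2] at hcompl
      linarith
  calc f s - f t = ∫ τ in arc, h τ ∂periodMeasure := harc
    _ ≤ ∫ τ in arc, g τ ∂periodMeasure :=
        setIntegral_mono_ae hh.integrableOn hg.integrableOn hle
    _ ≤ ∫ τ, g τ ∂periodMeasure := setIntegral_le_integral hg hg0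

lemma le_integral_add_integral_of_periodic (hfi : Integrable f periodMeasure)
    (hh : Integrable h periodMeasure) (hg : Integrable g periodMeasure)
    (hf : ∀ s ∈ Icc (0 : ℝ) 1, f s = f 0 + ∫ τ in (0 : ℝ)..s, h τ) (hper : f 1 = f 0)
    (hle : h ≤ᵐ[periodMeasure] g) (hg0 : 0 ≤ᵐ[periodMeasure] g) {s : ℝ}
    (hs : s ∈ Icc (0 : ℝ) 1) :
    f s ≤ ∫ t, f t ∂periodMeasure + ∫ τ, g τ ∂periodMeasure := by
  calc f s = ∫ _, f s ∂periodMeasure := by simp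
    _ ≤ ∫ t, (f t + ∫ τ, g τ ∂periodMeasure) ∂periodMeasure := by
        refine integral_mono_ae (integrable_const _) (hfi.add (integrable_const _)) ?_
        filter_upwards [ae_restrict_mem measurableSet_Ioc] with t ht
        exact sub_le_iff_le_add'.1
          (sub_le_integral_of_periodic hh hg hf hper hle hg0 hs (Ioc_subset_Icc_self ht))
    _ = ∫ t, f t ∂periodMeasure + ∫ τ, g τ ∂periodMeasure := by
        rw [integral_add hfi (integrable_const _)]
        simp

lemma abs_le_integral_of_periodic (hfi : Integrable f periodMeasure)
    (hh : Integrable h periodMeasure) (hg : Integrable g periodMeasure)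
    (hf : ∀ s ∈ Icc (0 : ℝ) 1, f s = f 0 + ∫ τ in (0 : ℝ)..s, h τ) (hper : f 1 = f 0)
    (hle : ∀ᵐ τ ∂periodMeasure, |h τ| ≤ g τ) (hmean : ∫ τ, f τ ∂periodMeasure = 0) {s : ℝ}
    (hs : s ∈ Icc (0 : ℝ) 1) : |f s| ≤ ∫ τ, g τ ∂periodMeasure := by
  have hg0 : 0 ≤ᵐ[periodMeasure] g := hle.mono fun τ hτ => (abs_nonneg _).trans hτ
  have hupper := le_integral_add_integral_of_periodic hfi hh hg hf hper
    (hle.mono fun τ hτ => (le_abs_self _).trans hτ) hg0 hs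
  have hlower := le_integral_add_integral_of_periodic (f := fun τ => -f τ) hfi.neg hh.neg hg
    (fun s hs => by simp [hf s hs, add_comm]) (neg_inj.2 hper)
    (hle.mono fun τ hτ => (neg_le_abs _).trans hτ) hg0 hs
  rw [integral_neg, hmean, neg_zero, zero_add] at hlower
  rw [hmean, zero_add] at hupper
  exact abs_le'.2 ⟨hupper, hlower⟩

end Primitive

section Slice

variable {X : Type*} [MeasurableSpace X] {P : Measure X} [SFinite P] {u φ : X → ℝ → ℝ} {s : ℝ}

lemma integrable_prod_restrict_Ioc
    (hφ : Integrable (fun p : X × ℝ => φ p.1 p.2) (P.prod periodMeasure)) (hs : s ≤ 1) :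
    Integrable (fun p : X × ℝ => φ p.1 p.2) (P.prod (volume.restrict (Ioc 0 s))) := by
  rw [← Measure.restrict_univ (μ := P), Measure.prod_restrict] at hφ ⊢
  exact IntegrableOn.mono_set hφ (prod_mono subset_rfl (Ioc_subset_Ioc_right hs))

lemma integrable_intervalIntegral
    (hφ : Integrable (fun p : X × ℝ => φ p.1 p.2) (P.prod periodMeasure))
    (hs : s ∈ Icc (0 : ℝ) 1) : Integrable (fun ξ => ∫ τ in (0 : ℝ)..s, φ ξ τ) P := by
  simp only [intervalIntegral.integral_of_le hs.1]
  exact (integrable_prod_restrict_Ioc hφ hs.2).integral_prod_left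

variable (hu : Integrable (fun p : X × ℝ => u p.1 p.2) (P.prod periodMeasure))
  (hφ : Integrable (fun p : X × ℝ => φ p.1 p.2) (P.prod periodMeasure))
  (heq : ∀ᵐ ξ ∂P, ∀ s ∈ Icc (0 : ℝ) 1, u ξ s = u ξ 0 + ∫ τ in (0 : ℝ)..s, φ ξ τ)
include hu hφ heq

lemma integrable_slice (hs : s ∈ Icc (0 : ℝ) 1) : Integrable (fun ξ => u ξ s) P := by
  obtain ⟨t, hut, ht⟩ := (hu.prod_left_ae.and (ae_restrict_mem measurableSet_Ioc)).exists
  have ht' := Ioc_subset_Icc_self ht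
  refine ((hut.sub (integrable_intervalIntegral hφ ht')).add
    (integrable_intervalIntegral hφ hs)).congr ?_
  filter_upwards [heq] with ξ hξ
  simp only [Pi.add_apply, Pi.sub_apply, hξ t ht', hξ s hs, add_sub_cancel_right]

lemma integral_slice_eq (hs : s ∈ Icc (0 : ℝ) 1) :
    ∫ ξ, u ξ s ∂P = ∫ ξ, u ξ 0 ∂P + ∫ τ in (0 : ℝ)..s, ∫ ξ, φ ξ τ ∂P := by
  have h0 := integrable_slice hu hφ heq (left_mem_Icc.2 zero_le_one)
  rw [integral_congr_ae (heq.mono fun ξ hξ => hξ s hs),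
    integral_add h0 (integrable_intervalIntegral hφ hs)]
  simp only [intervalIntegral.integral_of_le hs.1]
  rw [integral_integral_swap (integrable_prod_restrict_Ioc hφ hs.2)]

end Slice

/-- A solution on the time period `[0, 1]`, in integrated form, of `∂_s β = G + θ`, where `P` is
the space measure and `l` a lower bound for the spectral gap of the operator `A` with `G = A β`:
`G` conserves the mass of `β` and dissipates its spatial variance at rate `l`. -/
structure IsDissipativeSolution {X : Type*} [MeasurableSpace X] (P : Measure X) (l : ℝ)
    (β G θ : X → ℝ → ℝ) : Prop where
  memLp : MemLp (fun p : X × ℝ => β p.1 p.2) 2 (P.prod periodMeasure)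
  memLp_drift : MemLp (fun p : X × ℝ => G p.1 p.2) 2 (P.prod periodMeasure)
  memLp_source : MemLp (fun p : X × ℝ => θ p.1 p.2) 2 (P.prod periodMeasure)
  eq_add_integral : ∀ᵐ ξ ∂P, ∀ s ∈ Icc (0 : ℝ) 1,
    β ξ s = β ξ 0 + ∫ τ in (0 : ℝ)..s, (G ξ τ + θ ξ τ)
  periodic : ∀ ξ, β ξ 1 = β ξ 0
  mean_eq_zero : ∫ p, β p.1 p.2 ∂P.prod periodMeasure = 0
  gap_pos : 0 < l
  integral_drift : ∀ᵐ τ ∂periodMeasure, ∫ ξ, G ξ τ ∂P = 0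
  integral_drift_mul_le : ∀ᵐ τ ∂periodMeasure,
    ∫ ξ, G ξ τ * β ξ τ ∂P ≤ -l * Var[fun ξ => β ξ τ; P]

namespace IsDissipativeSolution

variable {X : Type*} [MeasurableSpace X] {P : Measure X} {l : ℝ} {β G θ : X → ℝ → ℝ} {s : ℝ}

lemma integrable_energyRate (hβ : IsDissipativeSolution P l β G θ) :
    Integrable (fun p : X × ℝ => 2 * (β p.1 p.2 * (G p.1 p.2 + θ p.1 p.2)))
      (P.prod periodMeasure) :=
  (hβ.memLp.integrable_mul (hβ.memLp_drift.add hβ.memLp_source)).const_mul 2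

lemma integrable_abs_source_mul (hβ : IsDissipativeSolution P l β G θ) :
    Integrable (fun p : X × ℝ => |θ p.1 p.2 * β p.1 p.2|) (P.prod periodMeasure) :=
  (hβ.memLp_source.integrable_mul hβ.memLp).abs

variable [IsProbabilityMeasure P]

lemma integrable_rate (hβ : IsDissipativeSolution P l β G θ) :
    Integrable (fun p : X × ℝ => G p.1 p.2 + θ p.1 p.2) (P.prod periodMeasure) :=
  (hβ.memLp_drift.add hβ.memLp_source).integrable one_le_two

lemma sq_eq_add_integral (hβ : IsDissipativeSolution P l β G θ) :
    ∀ᵐ ξ ∂P, ∀ s ∈ Icc (0 : ℝ) 1,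
      β ξ s ^ 2 = β ξ 0 ^ 2 + ∫ τ in (0 : ℝ)..s, 2 * (β ξ τ * (G ξ τ + θ ξ τ)) := by
  filter_upwards [hβ.eq_add_integral, hβ.integrable_rate.prod_right_ae] with ξ hξ hint s hs
  exact sq_eq_add_integral_of_eq_add_integral hint hξ hs

lemma memLp_slice (hβ : IsDissipativeSolution P l β G θ) (hs : s ∈ Icc (0 : ℝ) 1) :
    MemLp (fun ξ => β ξ s) 2 P :=
  (memLp_two_iff_integrable_sq (integrable_slice (hβ.memLp.integrable one_le_two)
    hβ.integrable_rate hβ.eq_add_integral hs).1).2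
    (integrable_slice hβ.memLp.integrable_sq hβ.integrable_energyRate hβ.sq_eq_add_integral hs)

lemma sq_integral_le (hβ : IsDissipativeSolution P l β G θ) (hs : s ∈ Icc (0 : ℝ) 1) :
    (∫ ξ, β ξ s ∂P) ^ 2 ≤ ∫ p, θ p.1 p.2 ^ 2 ∂P.prod periodMeasure := by
  have hβi := hβ.memLp.integrable one_le_two
  have hθi := hβ.memLp_source.integrable one_le_two
  have hrate : ∀ᵐ τ ∂periodMeasure, |∫ ξ, (G ξ τ + θ ξ τ) ∂P| ≤ ∫ ξ, |θ ξ τ| ∂P := by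
    filter_upwards [hβ.integral_drift, (hβ.memLp_drift.integrable one_le_two).prod_left_ae,
      hθi.prod_left_ae] with τ hG hGi hθi
    rw [integral_add hGi hθi, hG, zero_add]
    exact abs_integral_le_integral_abs
  have habs : |∫ ξ, β ξ s ∂P| ≤ ∫ p, |θ p.1 p.2| ∂P.prod periodMeasure := by
    rw [integral_prod_symm _ hθi.abs]
    exact abs_le_integral_of_periodic hβi.integral_prod_right
      hβ.integrable_rate.integral_prod_right hθi.abs.integral_prod_right
      (fun s hs => integral_slice_eq hβi hβ.integrable_rate hβ.eq_add_integral hs)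
      (by simp only [hβ.periodic]) hrate
      ((integral_prod_symm _ hβi).symm.trans hβ.mean_eq_zero) hs
  calc (∫ ξ, β ξ s ∂P) ^ 2 ≤ (∫ p, |θ p.1 p.2| ∂P.prod periodMeasure) ^ 2 :=
        sq_le_sq.2 (habs.trans (le_abs_self _))
    _ ≤ ∫ p, |θ p.1 p.2| ^ 2 ∂P.prod periodMeasure :=
        sq_integral_le_integral_sq hβ.memLp_source.abs
    _ = ∫ p, θ p.1 p.2 ^ 2 ∂P.prod periodMeasure := by simp only [sq_abs]

lemma ae_energyRate_le (hβ : IsDissipativeSolution P l β G θ) :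
    ∀ᵐ τ ∂periodMeasure, ∫ ξ, 2 * (β ξ τ * (G ξ τ + θ ξ τ)) ∂P ≤
      2 * ∫ ξ, |θ ξ τ * β ξ τ| ∂P - 2 * l * Var[fun ξ => β ξ τ; P] := by
  filter_upwards [hβ.integral_drift_mul_le,
    (hβ.memLp_drift.integrable_mul hβ.memLp).prod_left_ae,
    (hβ.memLp_source.integrable_mul hβ.memLp).prod_left_ae] with τ hdrift hGβ hθβ
  simp only [Pi.mul_apply] at hGβ hθβ
  have hsplit : ∫ ξ, 2 * (β ξ τ * (G ξ τ + θ ξ τ)) ∂P =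
      2 * (∫ ξ, G ξ τ * β ξ τ ∂P + ∫ ξ, θ ξ τ * β ξ τ ∂P) := by
    rw [← integral_add hGβ hθβ, integral_const_mul]
    simp only [mul_comm (β _ _), add_mul]
  have hsource : ∫ ξ, θ ξ τ * β ξ τ ∂P ≤ ∫ ξ, |θ ξ τ * β ξ τ| ∂P :=
    integral_mono hθβ hθβ.abs fun ξ => le_abs_self _
  rw [hsplit]
  linarith

lemma integral_energyRate_eq_zero (hβ : IsDissipativeSolution P l β G θ) :
    ∫ τ, ∫ ξ, 2 * (β ξ τ * (G ξ τ + θ ξ τ)) ∂P ∂periodMeasure = 0 :=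
  integral_eq_zero_of_periodic (f := fun s => ∫ ξ, β ξ s ^ 2 ∂P)
    (fun _ hs => integral_slice_eq hβ.memLp.integrable_sq hβ.integrable_energyRate
      hβ.sq_eq_add_integral hs) (by simp only [hβ.periodic])

lemma mul_integral_sq_le (hβ : IsDissipativeSolution P l β G θ) :
    l * ∫ p, β p.1 p.2 ^ 2 ∂P.prod periodMeasure ≤
      l * ∫ p, θ p.1 p.2 ^ 2 ∂P.prod periodMeasure +
        ∫ p, |θ p.1 p.2 * β p.1 p.2| ∂P.prod periodMeasure := by
  have hsource := hβ.integrable_abs_source_mul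
  have henergy := hβ.memLp.integrable_sq
  set Θ := ∫ p, θ p.1 p.2 ^ 2 ∂P.prod periodMeasure
  have hrate : ∀ᵐ τ ∂periodMeasure, ∫ ξ, 2 * (β ξ τ * (G ξ τ + θ ξ τ)) ∂P ≤
      2 * ∫ ξ, |θ ξ τ * β ξ τ| ∂P - 2 * l * (∫ ξ, β ξ τ ^ 2 ∂P - Θ) := by
    filter_upwards [hβ.ae_energyRate_le, ae_restrict_mem measurableSet_Ioc] with τ hτ hmem
    have hs := Ioc_subset_Icc_self hmem
    have hvar : ∫ ξ, β ξ τ ^ 2 ∂P - Θ ≤ Var[fun ξ => β ξ τ; P] := by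
      rw [variance_eq_sub (hβ.memLp_slice hs)]
      exact sub_le_sub_left (hβ.sq_integral_le hs) _
    have := mul_le_mul_of_nonneg_left hvar hβ.gap_pos.le
    linarith
  have hsource' := hsource.integral_prod_right.const_mul 2
  have henergy' := henergy.integral_prod_right.sub (integrable_const Θ)
  have hint := integral_mono_ae hβ.integrable_energyRate.integral_prod_right
    (hsource'.sub (henergy'.const_mul (2 * l))) hrate
  rw [hβ.integral_energyRate_eq_zero, integral_sub' hsource' (henergy'.const_mul _),
    integral_const_mul, integral_const_mul, integral_sub' henergy.integral_prod_right
    (integrable_const Θ), integral_const, ← integral_prod_symm _ hsource,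
    ← integral_prod_symm _ henergy, probReal_univ, one_smul] at hint
  linarith

lemma integral_sq_le (hβ : IsDissipativeSolution P l β G θ) :
    ∫ p, β p.1 p.2 ^ 2 ∂P.prod periodMeasure ≤
      (2 + 1 / l ^ 2) * ∫ p, θ p.1 p.2 ^ 2 ∂P.prod periodMeasure := by
  have hl := hβ.gap_pos
  have henergy := hβ.mul_integral_sq_le
  have hyoung := integral_abs_mul_le hβ.memLp_source hβ.memLp hl
  have hscale : (2 + 1 / l ^ 2) * ∫ p, θ p.1 p.2 ^ 2 ∂P.prod periodMeasure =
      2 / l * ((l + 1 / (2 * l)) * ∫ p, θ p.1 p.2 ^ 2 ∂P.prod periodMeasure) := by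
    field_simp
  rw [hscale, div_mul_eq_mul_div, le_div_iff₀ hl]
  linarith

lemma integral_slice_sq_le (hβ : IsDissipativeSolution P l β G θ) (hs : s ∈ Icc (0 : ℝ) 1) :
    ∫ ξ, β ξ s ^ 2 ∂P ≤ (5 + 2 / l ^ 2) * ∫ p, θ p.1 p.2 ^ 2 ∂P.prod periodMeasure := by
  have hsource := hβ.integrable_abs_source_mul
  have hrate : ∀ᵐ τ ∂periodMeasure, ∫ ξ, 2 * (β ξ τ * (G ξ τ + θ ξ τ)) ∂P ≤
      2 * ∫ ξ, |θ ξ τ * β ξ τ| ∂P := by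
    filter_upwards [hβ.ae_energyRate_le] with τ hτ
    exact hτ.trans (sub_le_self _ (mul_nonneg (by linarith [hβ.gap_pos]) (variance_nonneg _ _)))
  have hsup := le_integral_add_integral_of_periodic (f := fun s => ∫ ξ, β ξ s ^ 2 ∂P)
    hβ.memLp.integrable_sq.integral_prod_right hβ.integrable_energyRate.integral_prod_right
    (hsource.integral_prod_right.const_mul 2)
    (fun _ hs => integral_slice_eq hβ.memLp.integrable_sq hβ.integrable_energyRate
      hβ.sq_eq_add_integral hs)
    (by simp only [hβ.periodic]) hrate (ae_of_all _ fun τ => by positivity) hs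
  rw [integral_const_mul, ← integral_prod_symm _ hsource,
    ← integral_prod_symm _ hβ.memLp.integrable_sq] at hsup
  have hyoung := integral_abs_mul_le hβ.memLp_source hβ.memLp one_pos
  have hmean := hβ.integral_sq_le
  calc ∫ ξ, β ξ s ^ 2 ∂P
      ≤ 2 * ∫ p, β p.1 p.2 ^ 2 ∂P.prod periodMeasure +
        ∫ p, θ p.1 p.2 ^ 2 ∂P.prod periodMeasure := by linarith
    _ ≤ (5 + 2 / l ^ 2) * ∫ p, θ p.1 p.2 ^ 2 ∂P.prod periodMeasure := by
        rw [add_mul, div_eq_mul_one_div]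
        linarith

end IsDissipativeSolution

section CellProblem

variable {d : ℕ}

lemma volume_restrict_cube_prod_Ioo :
    (volume : Measure ((Fin d → ℝ) × ℝ)).restrict (cube d ×ˢ Ioo 0 1) =
      (cubeMeasure d).prod periodMeasure := by
  rw [Measure.volume_eq_prod, ← Measure.prod_restrict,
    Measure.restrict_congr_set Ioo_ae_eq_Ioc]

lemma exists_integral_jumpOperator_mul_self_le_variance {w : (Fin d → ℝ) → ℝ≥0∞}
    [IsFiniteMeasure (volume.withDensity w)] [(volume.withDensity w).IsNegInvariant]
    (hw : Measurable w) (hw0 : ∫⁻ z, w z ≠ 0) {c : ℝ} (hc : 0 < c) :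
    ∃ l : ℝ, 0 < l ∧ ∀ M m, IsJumpCoefficient c M m → ∀ v : (Fin d → ℝ) → ℝ, Measurable v →
      IsLatticePeriodic v → MemLp v 2 (cubeMeasure d) →
      ∫ ξ, jumpOperator (volume.withDensity w) m v ξ * v ξ ∂cubeMeasure d ≤
        -l * Var[v; cubeMeasure d] := by
  obtain ⟨l, hl, hpoincare⟩ := exists_mul_variance_le_integral_increment_sq hw hw0
  refine ⟨c / 2 * l, by positivity, fun M m hm v hv hvp hv2 => ?_⟩
  refine (integral_jumpOperator_mul_self_le hm hv hvp hv2).trans ?_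
  rw [neg_mul, neg_mul, neg_le_neg_iff, mul_assoc]
  exact mul_le_mul_of_nonneg_left (hpoincare v hv hvp hv2) (by positivity)

variable {a : (Fin d → ℝ) → ℝ} (hmeas : Measurable a) (hnonneg : ∀ z, 0 ≤ a z)
  (hint : Integrable a) (hmass : ∫ z, a z = 1) (hsymm : ∀ z, a (-z) = a z)
include hmeas hnonneg hint hmass hsymm

lemma memLp_Aop {c M : ℝ} {μ : (Fin d → ℝ) → (Fin d → ℝ) → ℝ → ℝ} {β : (Fin d → ℝ) → ℝ → ℝ}
    {ρ : Measure ℝ} [SFinite ρ]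
    (hμ : Measurable fun p : (Fin d → ℝ) × (Fin d → ℝ) × ℝ => μ p.1 p.2.1 p.2.2)
    (hcoeff : ∀ s, IsJumpCoefficient c M fun ξ η => μ ξ η s)
    (hβ : Measurable fun p : (Fin d → ℝ) × ℝ => β p.1 p.2)
    (hper : ∀ s, IsLatticePeriodic fun ξ => β ξ s)
    (hβ2 : MemLp (fun p : (Fin d → ℝ) × ℝ => β p.1 p.2) 2 ((cubeMeasure d).prod ρ)) :
    MemLp (fun p : (Fin d → ℝ) × ℝ => Aop a μ p.2 (fun η => β η p.2) p.1) 2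
      ((cubeMeasure d).prod ρ) := by
  have := isProbabilityMeasure_jumpLaw hnonneg hint hmass
  have hA := measurable_Aop hmeas hμ hβ
  have hfin := (memLp_two_iff_lintegral_enorm_sq_lt_top hβ2.1).1 hβ2
  refine (memLp_two_iff_lintegral_enorm_sq_lt_top hA.aestronglyMeasurable).2 ?_
  calc ∫⁻ p, ‖Aop a μ p.2 (fun η => β η p.2) p.1‖ₑ ^ 2 ∂(cubeMeasure d).prod ρ
      = ∫⁻ s, ∫⁻ ξ, ‖Aop a μ s (fun η => β η s) ξ‖ₑ ^ 2 ∂cubeMeasure d ∂ρ :=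
        lintegral_prod_symm' _ (by fun_prop)
    _ ≤ ∫⁻ s, ENNReal.ofReal M ^ 2 * 4 * ∫⁻ ξ, ‖β ξ s‖ₑ ^ 2 ∂cubeMeasure d ∂ρ := by
        refine lintegral_mono fun s => ?_
        rw [Aop_eq_jumpOperator hmeas hnonneg hsymm, mul_assoc]
        exact lintegral_enorm_sq_jumpOperator_le (hcoeff s) (hβ.comp measurable_prodMk_right)
          (hper s)
    _ = ENNReal.ofReal M ^ 2 * 4 * ∫⁻ p, ‖β p.1 p.2‖ₑ ^ 2 ∂(cubeMeasure d).prod ρ := by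
        rw [lintegral_const_mul' _ _ (by finiteness), lintegral_prod_symm' _ (by fun_prop)]
    _ < ∞ := by finiteness

lemma exists_forall_isDissipativeSolution {c : ℝ} (hc : 0 < c) :
    ∃ l : ℝ, ∀ (M : ℝ) (μ : (Fin d → ℝ) → (Fin d → ℝ) → ℝ → ℝ),
      (Measurable fun p : (Fin d → ℝ) × (Fin d → ℝ) × ℝ => μ p.1 p.2.1 p.2.2) →
      (∀ s, IsJumpCoefficient c M fun ξ η => μ ξ η s) →
      ∀ θ : (Fin d → ℝ) → ℝ → ℝ,
        MemLp (fun p : (Fin d → ℝ) × ℝ => θ p.1 p.2) 2 ((cubeMeasure d).prod periodMeasure) →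
        ∀ β, IsCellSol a μ θ β →
          ∫ p : (Fin d → ℝ) × ℝ, β p.1 p.2 ∂(cubeMeasure d).prod periodMeasure = 0 →
          IsDissipativeSolution (cubeMeasure d) l β
            (fun ξ τ => Aop a μ τ (fun η => β η τ) ξ) θ := by
  have hprob := isProbabilityMeasure_jumpLaw hnonneg hint hmass
  have hneg := isNegInvariant_jumpLaw hsymm
  have hmass1 := lintegral_ofReal_eq_one hnonneg hint hmass
  obtain ⟨l, hl, hgap⟩ := exists_integral_jumpOperator_mul_self_le_variance hmeas.ennreal_ofReal
    (hmass1.trans_ne one_ne_zero) hc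
  refine ⟨l, fun M μ hμ hcoeff θ hθ β ⟨hβ, hperx, hpert, hβ2, heq⟩ hmean => ?_⟩
  have hslice : ∀ s, Measurable fun ξ => β ξ s := fun s => hβ.comp measurable_prodMk_right
  have hper : ∀ s, IsLatticePeriodic fun ξ => β ξ s := fun s ξ k => hperx ξ s k
  rw [IntegrableOn, volume_restrict_cube_prod_Ioo] at hβ2
  have hβL : MemLp (fun p : (Fin d → ℝ) × ℝ => β p.1 p.2) 2
      ((cubeMeasure d).prod periodMeasure) :=
    (memLp_two_iff_integrable_sq hβ.aestronglyMeasurable).2 hβ2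
  have hslice2 : ∀ᵐ τ ∂periodMeasure, MemLp (fun ξ => β ξ τ) 2 (cubeMeasure d) :=
    hβ2.prod_left_ae.mono fun τ hτ =>
      (memLp_two_iff_integrable_sq (hslice τ).aestronglyMeasurable).2 hτ
  refine ⟨hβL, memLp_Aop hmeas hnonneg hint hmass hsymm hμ hcoeff hβ hper hβL, hθ,
    ae_restrict_of_ae heq, fun ξ => by simpa using hpert ξ 0, hmean, hl, ?_, ?_⟩
  · filter_upwards [hslice2] with τ hτ
    rw [Aop_eq_jumpOperator hmeas hnonneg hsymm]
    exact integral_jumpOperator (hcoeff τ) (hslice τ) (hper τ) hτ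
  · filter_upwards [hslice2] with τ hτ
    rw [Aop_eq_jumpOperator hmeas hnonneg hsymm]
    exact hgap M _ (hcoeff τ) _ (hslice τ) (hper τ) hτ

end CellProblem

theorem stmt10_general {d : ℕ} {a : (Fin d → ℝ) → ℝ} (hmeas : Measurable a)
    (hnonneg : ∀ z, 0 ≤ a z) (hint : Integrable a) (hmass : ∫ z, a z = 1)
    (hsymm : ∀ z, a (-z) = a z) {c : ℝ} (hc : 0 < c) :
    ∃ C : ℝ, 0 < C ∧ ∀ (M : ℝ) (μ : (Fin d → ℝ) → (Fin d → ℝ) → ℝ → ℝ),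
      (Measurable fun p : (Fin d → ℝ) × (Fin d → ℝ) × ℝ => μ p.1 p.2.1 p.2.2) →
      (∀ s, IsJumpCoefficient c M fun ξ η => μ ξ η s) →
      ∀ θ : (Fin d → ℝ) → ℝ → ℝ, (Measurable fun p : (Fin d → ℝ) × ℝ => θ p.1 p.2) →
        IntegrableOn (fun p : (Fin d → ℝ) × ℝ => θ p.1 p.2 ^ 2) (cube d ×ˢ Ioo (0 : ℝ) 1) →
        ∀ β, IsCellSol a μ θ β →
          ∫ p in cube d ×ˢ Ioo (0 : ℝ) 1, β (Prod.fst p) (Prod.snd p) = 0 →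
          ∀ s ∈ Icc (0 : ℝ) 1, √(∫ ξ in cube d, β ξ s ^ 2) ≤
            C * √(∫ p in cube d ×ˢ Ioo (0 : ℝ) 1, θ (Prod.fst p) (Prod.snd p) ^ 2) := by
  obtain ⟨l, hsol⟩ := exists_forall_isDissipativeSolution hmeas hnonneg hint hmass hsymm hc
  refine ⟨√(5 + 2 / l ^ 2), by positivity, fun M μ hμ hcoeff θ hθ hθ2 β hβ hmean s hs => ?_⟩
  rw [IntegrableOn, volume_restrict_cube_prod_Ioo] at hθ2
  rw [volume_restrict_cube_prod_Ioo] at hmean ⊢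
  have hθL := (memLp_two_iff_integrable_sq hθ.aestronglyMeasurable).2 hθ2
  rw [← Real.sqrt_mul (by positivity)]
  exact Real.sqrt_le_sqrt ((hsol M μ hμ hcoeff θ hθL β hβ hmean).integral_slice_sq_le hs)

end Development

/-- There is `C > 0`, depending only on `d`, `a`, `μ⁻`, `μ⁺`, such that every
time-periodic solution `β` of `∂_s β - A(s)β = θ` with zero mean over `𝕋^{d+1}`
satisfies `‖β‖_{L^∞(0,1;L²(𝕋^d))} ≤ C ‖θ‖_{L²(𝕋^{d+1})}`. -/
theorem stmt10 {d : ℕ} (hd : 1 ≤ d)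
    (a : (Fin d → ℝ) → ℝ) (μm μp : ℝ)
    (hameas : Measurable a) (hanonneg : ∀ z, 0 ≤ a z)
    (haint : Integrable a) (hamass : ∫ z, a z = 1)
    (hamom : Integrable (fun z => ‖z‖ ^ 2 * a z))
    (hasymm : ∀ z, a (-z) = a z)
    (hμm : 0 < μm) :
    ∃ C : ℝ, 0 < C ∧
      ∀ μ : (Fin d → ℝ) → (Fin d → ℝ) → ℝ → ℝ,
        (Measurable fun p : (Fin d → ℝ) × (Fin d → ℝ) × ℝ => μ p.1 p.2.1 p.2.2) →
        (∀ ξ η s, ∀ k : Fin d → ℤ, μ (ξ + fun i => (k i : ℝ)) η s = μ ξ η s) →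
        (∀ ξ η s, ∀ k : Fin d → ℤ, μ ξ (η + fun i => (k i : ℝ)) s = μ ξ η s) →
        (∀ ξ η s, μ ξ η (s + 1) = μ ξ η s) →
        (∀ ξ η s, μ ξ η s = μ η ξ s) →
        (∀ ξ η s, μm ≤ μ ξ η s) → (∀ ξ η s, μ ξ η s ≤ μp) →
        ∀ θ : (Fin d → ℝ) → ℝ → ℝ,
          (Measurable fun p : (Fin d → ℝ) × ℝ => θ p.1 p.2) →
          (∀ ξ s, ∀ k : Fin d → ℤ, θ (ξ + fun i => (k i : ℝ)) s = θ ξ s) →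
          (∀ ξ s, θ ξ (s + 1) = θ ξ s) →
          IntegrableOn (fun p : (Fin d → ℝ) × ℝ => (θ p.1 p.2) ^ 2)
            (cube d ×ˢ Set.Ioo (0 : ℝ) 1) →
          (∫ p in cube d ×ˢ Set.Ioo (0 : ℝ) 1, θ (Prod.fst p) (Prod.snd p)) = 0 →
          ∀ β, IsCellSol a μ θ β →
            (∫ p in cube d ×ˢ Set.Ioo (0 : ℝ) 1, β (Prod.fst p) (Prod.snd p)) = 0 →
            ∀ᵐ s ∂(volume.restrict (Set.Ioo (0 : ℝ) 1)),
              Real.sqrt (∫ ξ in cube d, (β ξ s) ^ 2) ≤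
                C * Real.sqrt (∫ p in cube d ×ˢ Set.Ioo (0 : ℝ) 1,
                  (θ (Prod.fst p) (Prod.snd p)) ^ 2) := by
  obtain ⟨C, hC, hbound⟩ := stmt10_general hameas hanonneg haint hamass hasymm hμm
  refine ⟨C, hC, fun μ hμ hμξ hμη _ hμsymm hlower hupper θ hθ _ _ hθ2 _ β hβ hmean => ?_⟩
  have hcoeff : ∀ s, IsJumpCoefficient μm μp fun ξ η => μ ξ η s := fun s =>
    ⟨by fun_prop, fun ξ η k => (hμξ _ _ _ _).trans (hμη _ _ _ _), fun ξ η => hμsymm ξ η s, hμm,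
      fun ξ η => hlower ξ η s, fun ξ η => hupper ξ η s⟩
  filter_upwards [ae_restrict_mem measurableSet_Ioo] with s hs
  exact hbound μp μ hμ hcoeff θ hθ hθ2 β hβ hmean s (Set.Ioo_subset_Icc_self hs)
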